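/- Let s ∈ (0,1), r ∈ [0, 4−2s] and λ_min > 0. There exists a constant C = C(r, s, λ_min) > 0 with the following property. Let Δt ∈ (0,1), let N be a positive integer with T := NΔt > (1/λ_min)·log(Δt^{−(r/2+s)}), let (λ_m)_{m≥1} be a sequence of reals with λ_m ≥ λ_min for all m, and let (c_m)_{m≥1} be a sequence of reals with Σ_m λ_m^r c_m² < ∞. Then Σ_{m} c_m² · (λ_m^{−s} − (1/Γ(s)) ∫_0^T I_r[t ↦ e^{−λ_m t}](t) t^{s−1} dt)² ≤ C · Δt^{r+2s} · Σ_m λ_m^r c_m², where I_r denotes: the piecewise-constant interpolant if r ∈ [0, 2−2s], the modified interpolant if r ∈ (2−2s, 2), and the piecewise-linear interpolant if r ∈ [2, 4−2s]. -/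

import Mathlib

open Real MeasureTheory intervalIntegral

/-- The piecewise-constant interpolant of `φ` on the uniform grid `t_j = jΔt`:
`I[φ](t) = φ(t_j)` for `t ∈ [t_j, t_{j+1})`. -/
noncomputable def pcInterp (Δt : ℝ) (φ : ℝ → ℝ) (t : ℝ) : ℝ :=
  φ ((⌊t / Δt⌋₊ : ℝ) * Δt)

/-- The piecewise-linear interpolant of `φ` on the uniform grid `t_j = jΔt`:
`I[φ](t) = ((t_{j+1}−t)/Δt)·φ(t_j) + ((t−t_j)/Δt)·φ(t_{j+1})` for `t ∈ [t_j, t_{j+1})`. -/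
noncomputable def plInterp (Δt : ℝ) (φ : ℝ → ℝ) (t : ℝ) : ℝ :=
  ((((⌊t / Δt⌋₊ : ℝ) + 1) * Δt - t) / Δt) * φ ((⌊t / Δt⌋₊ : ℝ) * Δt) +
    ((t - (⌊t / Δt⌋₊ : ℝ) * Δt) / Δt) * φ (((⌊t / Δt⌋₊ : ℝ) + 1) * Δt)

/-- The modified interpolant: `I[φ](t) = φ(t_1)` on `[t_0, t_1)`, and the
piecewise-linear interpolant on `[t_j, t_{j+1})` for `j ≥ 1`. -/
noncomputable def modInterp (Δt : ℝ) (φ : ℝ → ℝ) (t : ℝ) : ℝ :=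
  if t < Δt then φ Δt else plInterp Δt φ t

/-- The interpolant `I_r`: piecewise constant for `r ∈ [0, 2−2s]`, modified for
`r ∈ (2−2s, 2)`, and piecewise linear for `r ∈ [2, 4−2s]`. -/
noncomputable def interpR (r s Δt : ℝ) (φ : ℝ → ℝ) : ℝ → ℝ :=
  if r ≤ 2 - 2 * s then pcInterp Δt φ
  else if r < 2 then modInterp Δt φ
  else plInterp Δt φ

/-!
Subtracting the Gamma integral `Γ(s) λ^{-s} = ∫₀^∞ e^{-λt} t^{s-1} dt` from the quadrature leaves
the tail beyond `T`, at most `Γ(s) λ^{-s} e^{-λT}`, and the weighted interpolation error on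
`[0, T]`. On the first cell the latter is controlled pointwise by `(λΔt)^{r/2}`, and
`∫₀^Δt t^{s-1} dt = Δt^s / s` supplies the missing factor `Δt^s`. Past the first cell interpolation
gains the full power `(λΔt)^{r/2+s}` together with the decay `e^{-λt/2}`, and integrating
`e^{-λt/2} t^{s-1}` gives a factor `λ^{-s}`. Both contributions are `O(λ^{r/2} Δt^{r/2+s})`; the
lower bound on `T` makes the tail of that size too.
-/

section ExpBounds

lemma le_rpow_of_le_one_of_le_rpow {h a b x : ℝ} (hh : 0 < h) (ha : 0 ≤ a) (hab : a ≤ b)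
    (hx : x ≤ 1) (hxb : x ≤ h ^ b) : x ≤ h ^ a := by
  rcases le_total h 1 with h_le | h_ge
  · exact hxb.trans (rpow_le_rpow_of_exponent_ge hh h_le hab)
  · exact hx.trans (one_le_rpow h_ge ha)

lemma one_sub_exp_neg_le_rpow {h x a : ℝ} (hh : 0 < h) (hxh : x ≤ h) (ha : 0 ≤ a) (ha1 : a ≤ 1) :
    1 - exp (-x) ≤ h ^ a := by
  refine le_rpow_of_le_one_of_le_rpow hh ha ha1 (by linarith [exp_pos (-x)]) ?_
  rw [rpow_one]
  linarith [add_one_le_exp (-x)]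

lemma exp_neg_le_one_sub_add_sq {x : ℝ} (hx : 0 ≤ x) : exp (-x) ≤ 1 - x + x ^ 2 := by
  rw [exp_neg, inv_le_iff_one_le_mul₀ (exp_pos x)]
  calc 1 ≤ (1 - x + x ^ 2) * (x + 1) := by linarith [pow_nonneg hx 3]
    _ ≤ (1 - x + x ^ 2) * exp x :=
      mul_le_mul_of_nonneg_left (add_one_le_exp x) (by nlinarith [sq_nonneg (x - 1)])

lemma abs_chord_sub_exp_neg_le_rpow {h θ a : ℝ} (hh : 0 < h) (hθ : θ ∈ Set.Icc (0 : ℝ) 1)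
    (ha : 0 ≤ a) (ha2 : a ≤ 2) :
    |(1 - θ) + θ * exp (-h) - exp (-(θ * h))| ≤ h ^ a := by
  obtain ⟨hθ0, hθ1⟩ := hθ
  have convexity : exp (-(θ * h)) ≤ (1 - θ) + θ * exp (-h) := by
    simpa using convexOn_exp.2 (Set.mem_univ 0) (Set.mem_univ (-h)) (sub_nonneg.2 hθ1) hθ0
      (sub_add_cancel 1 θ)
  have chord_le_one : (1 - θ) + θ * exp (-h) ≤ 1 := by
    have := mul_le_of_le_one_right hθ0 (exp_le_one_iff.2 (neg_nonpos.2 hh.le))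
    linarith
  rw [abs_of_nonneg (sub_nonneg.2 convexity)]
  refine le_rpow_of_le_one_of_le_rpow hh ha ha2 (by linarith [exp_pos (-(θ * h))]) ?_
  rw [rpow_two]
  calc (1 - θ) + θ * exp (-h) - exp (-(θ * h))
      ≤ (1 - θ) + θ * (1 - h + h ^ 2) - (-(θ * h) + 1) := by
        gcongr
        · exact exp_neg_le_one_sub_add_sq hh.le
        · exact add_one_le_exp _
    _ = θ * h ^ 2 := by ring
    _ ≤ h ^ 2 := mul_le_of_le_one_left (sq_nonneg h) hθ1

lemma abs_exp_sub_exp_le {lam Δt u v a : ℝ} (hlam : 0 < lam) (hΔt : 0 < Δt) (huv : u ≤ v)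
    (hvu : v ≤ u + Δt) (ha : 0 ≤ a) (ha1 : a ≤ 1) :
    |exp (-lam * u) - exp (-lam * v)| ≤ (lam * Δt) ^ a * exp (-lam * u) := by
  have factor : exp (-lam * u) - exp (-lam * v) =
      (1 - exp (-(lam * (v - u)))) * exp (-lam * u) := by
    rw [sub_mul, one_mul, ← exp_add]
    ring_nf
  have h_nonneg : 0 ≤ 1 - exp (-(lam * (v - u))) :=
    sub_nonneg.2 (exp_le_one_iff.2 (neg_nonpos.2 (mul_nonneg hlam.le (sub_nonneg.2 huv))))
  rw [factor, abs_mul, abs_of_nonneg h_nonneg, abs_of_pos (exp_pos _)]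
  gcongr
  exact one_sub_exp_neg_le_rpow (by positivity)
    (mul_le_mul_of_nonneg_left (by linarith) hlam.le) ha ha1

end ExpBounds

section Interpolation

/-- The grid point `t_j = jΔt` at the left end of the cell `[t_j, t_{j+1})` containing `t ≥ 0`; the
truncating floor makes it `0` for negative `t`. -/
noncomputable def gridFloor (Δt t : ℝ) : ℝ := ⌊t / Δt⌋₊ * Δt

variable {Δt t : ℝ}

lemma gridFloor_nonneg (hΔt : 0 ≤ Δt) : 0 ≤ gridFloor Δt t :=
  mul_nonneg (Nat.cast_nonneg _) hΔt

lemma gridFloor_le (hΔt : 0 < Δt) (ht : 0 ≤ t) : gridFloor Δt t ≤ t :=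
  (le_div_iff₀ hΔt).1 (Nat.floor_le (by positivity))

lemma lt_gridFloor_add (hΔt : 0 < Δt) : t < gridFloor Δt t + Δt := by
  have := (div_lt_iff₀ hΔt).1 (Nat.lt_floor_add_one (t / Δt))
  rwa [add_one_mul] at this

lemma half_le_gridFloor (hΔt : 0 < Δt) (ht : Δt ≤ t) : t / 2 ≤ gridFloor Δt t := by
  have one_le_floor : (1 : ℝ) ≤ ⌊t / Δt⌋₊ := by
    exact_mod_cast (Nat.one_le_floor_iff _).2 ((one_le_div hΔt).2 ht)
  have step_le : Δt ≤ gridFloor Δt t := le_mul_of_one_le_left hΔt.le one_le_floor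
  linarith [lt_gridFloor_add (t := t) hΔt]

lemma plInterp_eq_chord (hΔt : Δt ≠ 0) (φ : ℝ → ℝ) :
    plInterp Δt φ t = (1 - (t - gridFloor Δt t) / Δt) * φ (gridFloor Δt t) +
      (t - gridFloor Δt t) / Δt * φ (gridFloor Δt t + Δt) := by
  simp only [plInterp, gridFloor, add_one_mul]
  congr 2
  field_simp
  ring

lemma measurable_comp_floor_div (f : ℕ → ℝ) (Δt : ℝ) : Measurable fun t : ℝ => f ⌊t / Δt⌋₊ :=
  measurable_from_nat.comp (Nat.measurable_floor.comp (measurable_id.div_const Δt))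

lemma measurable_pcInterp (Δt : ℝ) (φ : ℝ → ℝ) : Measurable (pcInterp Δt φ) :=
  measurable_comp_floor_div (fun n => φ (n * Δt)) Δt

lemma measurable_plInterp (Δt : ℝ) (φ : ℝ → ℝ) : Measurable (plInterp Δt φ) := by
  have h_floor : Measurable fun t : ℝ => (⌊t / Δt⌋₊ : ℝ) :=
    measurable_comp_floor_div (fun n => n) Δt
  have h_left : Measurable fun t : ℝ => φ (⌊t / Δt⌋₊ * Δt) :=
    measurable_comp_floor_div (fun n => φ (n * Δt)) Δt
  have h_right : Measurable fun t : ℝ => φ ((⌊t / Δt⌋₊ + 1) * Δt) :=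
    measurable_comp_floor_div (fun n => φ ((n + 1) * Δt)) Δt
  exact (((((h_floor.add_const 1).mul_const Δt).sub measurable_id).div_const Δt).mul h_left).add
    (((measurable_id.sub (h_floor.mul_const Δt)).div_const Δt).mul h_right)

lemma measurable_modInterp (Δt : ℝ) (φ : ℝ → ℝ) : Measurable (modInterp Δt φ) :=
  Measurable.ite measurableSet_Iio measurable_const (measurable_plInterp Δt φ)

lemma measurable_interpR (r s Δt : ℝ) (φ : ℝ → ℝ) : Measurable (interpR r s Δt φ) := by
  unfold interpR
  split_ifs
  exacts [measurable_pcInterp Δt φ, measurable_modInterp Δt φ, measurable_plInterp Δt φ]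

variable {lam a r s : ℝ}

lemma abs_pcInterp_exp_sub_le (hlam : 0 < lam) (hΔt : 0 < Δt) (ht : 0 ≤ t) (ha : 0 ≤ a)
    (ha1 : a ≤ 1) :
    |pcInterp Δt (fun u => exp (-lam * u)) t - exp (-lam * t)| ≤
      (lam * Δt) ^ a * exp (-lam * gridFloor Δt t) :=
  abs_exp_sub_exp_le hlam hΔt (gridFloor_le hΔt ht) (lt_gridFloor_add hΔt).le ha ha1

lemma abs_plInterp_exp_sub_le (hlam : 0 < lam) (hΔt : 0 < Δt) (ht : 0 ≤ t) (ha : 0 ≤ a)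
    (ha2 : a ≤ 2) :
    |plInterp Δt (fun u => exp (-lam * u)) t - exp (-lam * t)| ≤
      (lam * Δt) ^ a * exp (-lam * gridFloor Δt t) := by
  set τ := gridFloor Δt t with hτ
  obtain ⟨θ, hθ⟩ : ∃ θ, θ = (t - τ) / Δt := ⟨_, rfl⟩
  have hθ_mem : θ ∈ Set.Icc (0 : ℝ) 1 := by
    rw [hθ, Set.mem_Icc, div_le_one hΔt]
    exact ⟨div_nonneg (sub_nonneg.2 (gridFloor_le hΔt ht)) hΔt.le,
      by linarith [lt_gridFloor_add (t := t) hΔt]⟩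
  have t_eq : t = τ + θ * Δt := by
    rw [hθ]
    field_simp
    ring
  have exp_right : exp (-lam * (τ + Δt)) = exp (-(lam * Δt)) * exp (-lam * τ) := by
    rw [← exp_add]
    ring_nf
  have exp_mid : exp (-lam * t) = exp (-(θ * (lam * Δt))) * exp (-lam * τ) := by
    rw [← exp_add]
    congr 1
    linear_combination -lam * t_eq
  have factor : plInterp Δt (fun u => exp (-lam * u)) t - exp (-lam * t) =
      ((1 - θ) + θ * exp (-(lam * Δt)) - exp (-(θ * (lam * Δt)))) * exp (-lam * τ) := by
    rw [plInterp_eq_chord hΔt.ne', ← hτ, ← hθ, exp_right, exp_mid]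
    ring
  rw [factor, abs_mul, abs_of_pos (exp_pos _)]
  gcongr
  exact abs_chord_sub_exp_neg_le_rpow (by positivity) hθ_mem ha ha2

lemma abs_interpR_exp_sub_le_of_le (hs : 0 ≤ s) (hr : r ∈ Set.Icc 0 (4 - 2 * s)) (hlam : 0 < lam)
    (hΔt : 0 < Δt) (ht0 : 0 ≤ t) (ht : t ≤ Δt) :
    |interpR r s Δt (fun u => exp (-lam * u)) t - exp (-lam * t)| ≤ (lam * Δt) ^ (r / 2) := by
  obtain ⟨hr0, hr1⟩ := hr
  have drop_exp {u : ℝ} (hu : 0 ≤ u) :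
      (lam * Δt) ^ (r / 2) * exp (-lam * u) ≤ (lam * Δt) ^ (r / 2) :=
    mul_le_of_le_one_right (by positivity) (exp_le_one_iff.2 (by nlinarith))
  have pl_bound := (abs_plInterp_exp_sub_le hlam hΔt ht0 (a := r / 2) (by linarith)
    (by linarith)).trans (drop_exp (gridFloor_nonneg hΔt.le))
  unfold interpR
  split_ifs with hpc hmod
  · exact (abs_pcInterp_exp_sub_le hlam hΔt ht0 (by linarith) (by linarith)).trans
      (drop_exp (gridFloor_nonneg hΔt.le))
  · unfold modInterp
    split_ifs
    · rw [abs_sub_comm]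
      exact (abs_exp_sub_exp_le hlam hΔt ht (by linarith) (by linarith) (by linarith)).trans
        (drop_exp ht0)
    · exact pl_bound
  · exact pl_bound

lemma abs_interpR_exp_sub_le_of_ge (hs : 0 ≤ s) (hr : r ∈ Set.Icc 0 (4 - 2 * s)) (hlam : 0 < lam)
    (hΔt : 0 < Δt) (ht : Δt ≤ t) :
    |interpR r s Δt (fun u => exp (-lam * u)) t - exp (-lam * t)| ≤
      (lam * Δt) ^ (r / 2 + s) * exp (-(lam / 2 * t)) := by
  obtain ⟨hr0, hr1⟩ := hr
  have ht0 : 0 ≤ t := hΔt.le.trans ht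
  have exp_gridFloor_le : exp (-lam * gridFloor Δt t) ≤ exp (-(lam / 2 * t)) :=
    exp_le_exp.2 (by nlinarith [half_le_gridFloor hΔt ht])
  refine le_trans ?_ (mul_le_mul_of_nonneg_left exp_gridFloor_le (by positivity))
  unfold interpR
  split_ifs with hpc hmod
  · exact abs_pcInterp_exp_sub_le hlam hΔt ht0 (by linarith) (by linarith)
  · rw [modInterp, if_neg ht.not_gt]
    exact abs_plInterp_exp_sub_le hlam hΔt ht0 (by linarith) (by linarith)
  · exact abs_plInterp_exp_sub_le hlam hΔt ht0 (by linarith) (by linarith)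

end Interpolation

section GammaWeight

variable {s lam : ℝ}

lemma integrableOn_rpow_mul_exp_neg_mul (hs : 0 < s) (hlam : 0 < lam) :
    IntegrableOn (fun t => t ^ (s - 1) * exp (-(lam * t))) (Set.Ioi 0) := by
  simpa using integrableOn_rpow_mul_exp_neg_mul_rpow (s := s - 1) (by linarith) one_pos hlam

lemma integral_rpow_mul_exp_neg_mul_eq (hs : 0 < s) (hlam : 0 < lam) :
    ∫ t in Set.Ioi 0, t ^ (s - 1) * exp (-(lam * t)) = lam ^ (-s) * Gamma s := by
  rw [integral_rpow_mul_exp_neg_mul_Ioi hs hlam, one_div, inv_rpow hlam.le, rpow_neg hlam.le]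

lemma setIntegral_Ioi_comp_add_right (f : ℝ → ℝ) (T : ℝ) :
    ∫ t in Set.Ioi 0, f (t + T) = ∫ t in Set.Ioi T, f t := by
  simpa using (measurePreserving_add_right volume T).setIntegral_preimage_emb
    (measurableEmbedding_addRight T) f (Set.Ioi T)

lemma integral_Ioi_rpow_mul_exp_neg_mul_le {T : ℝ} (hs : 0 < s) (hs1 : s ≤ 1) (hlam : 0 < lam)
    (hT : 0 ≤ T) :
    ∫ t in Set.Ioi T, t ^ (s - 1) * exp (-(lam * t)) ≤
      exp (-(lam * T)) * (lam ^ (-s) * Gamma s) := by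
  rw [← integral_rpow_mul_exp_neg_mul_eq hs hlam, ← MeasureTheory.integral_const_mul,
    ← setIntegral_Ioi_comp_add_right]
  refine integral_mono_of_nonneg ?_ ((integrableOn_rpow_mul_exp_neg_mul hs hlam).const_mul _) ?_
  all_goals filter_upwards [ae_restrict_mem measurableSet_Ioi] with t ht
  all_goals have ht : 0 < t := ht
  · simp only [Pi.zero_apply]
    positivity
  · have exp_split : exp (-(lam * (t + T))) = exp (-(lam * T)) * exp (-(lam * t)) := by
      rw [← exp_add]
      ring_nf
    have weight_le : (t + T) ^ (s - 1) ≤ t ^ (s - 1) :=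
      rpow_le_rpow_of_nonpos ht (by linarith) (by linarith)
    rw [exp_split, mul_left_comm]
    gcongr

lemma integrableOn_and_integral_norm_le_of_bounded {E : ℝ → ℝ} {A δ : ℝ} (hE : Measurable E)
    (hs : 0 < s) (hδ : 0 ≤ δ) (hbound : ∀ t ∈ Set.Ioc 0 δ, |E t| ≤ A) :
    IntegrableOn (fun t => E t * t ^ (s - 1)) (Set.Ioc 0 δ) ∧
      ∫ t in Set.Ioc 0 δ, ‖E t * t ^ (s - 1)‖ ≤ A * (δ ^ s / s) := by
  have dominated : ∀ t ∈ Set.Ioc 0 δ, ‖E t * t ^ (s - 1)‖ ≤ A * t ^ (s - 1) := by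
    intro t ht
    rw [norm_mul, norm_eq_abs, norm_of_nonneg (rpow_nonneg ht.1.le _)]
    exact mul_le_mul_of_nonneg_right (hbound t ht) (rpow_nonneg ht.1.le _)
  have h_int : IntegrableOn (fun t => A * t ^ (s - 1)) (Set.Ioc 0 δ) :=
    (intervalIntegrable_iff_integrableOn_Ioc_of_le hδ).1
      ((intervalIntegrable_rpow' (by linarith)).const_mul A)
  have h_intE : IntegrableOn (fun t => E t * t ^ (s - 1)) (Set.Ioc 0 δ) :=
    h_int.mono' (by fun_prop) (ae_restrict_of_forall_mem measurableSet_Ioc dominated)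
  refine ⟨h_intE, (setIntegral_mono_on h_intE.norm h_int measurableSet_Ioc dominated).trans_eq ?_⟩
  rw [← integral_of_le hδ, intervalIntegral.integral_const_mul,
    integral_rpow (Or.inl (by linarith)), sub_add_cancel, zero_rpow hs.ne', sub_zero]

lemma integrableOn_and_integral_norm_le_of_exp_decay {E : ℝ → ℝ} {B δ : ℝ} (hE : Measurable E)
    (hs : 0 < s) (hlam : 0 < lam) (hδ : 0 ≤ δ) (hB : 0 ≤ B)
    (hbound : ∀ t ∈ Set.Ioi δ, |E t| ≤ B * exp (-(lam * t))) :
    IntegrableOn (fun t => E t * t ^ (s - 1)) (Set.Ioi δ) ∧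
      ∫ t in Set.Ioi δ, ‖E t * t ^ (s - 1)‖ ≤ B * (lam ^ (-s) * Gamma s) := by
  have dominated : ∀ t ∈ Set.Ioi δ,
      ‖E t * t ^ (s - 1)‖ ≤ B * (t ^ (s - 1) * exp (-(lam * t))) := by
    intro t ht
    have weight_nonneg : 0 ≤ t ^ (s - 1) := rpow_nonneg (hδ.trans (le_of_lt ht)) _
    rw [norm_mul, norm_eq_abs, norm_of_nonneg weight_nonneg, mul_left_comm, mul_comm]
    exact mul_le_mul_of_nonneg_left (hbound t ht) weight_nonneg
  have h_int : IntegrableOn (fun t => B * (t ^ (s - 1) * exp (-(lam * t)))) (Set.Ioi 0) :=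
    (integrableOn_rpow_mul_exp_neg_mul hs hlam).const_mul B
  have h_sub : Set.Ioi δ ⊆ Set.Ioi 0 := Set.Ioi_subset_Ioi hδ
  have h_intE : IntegrableOn (fun t => E t * t ^ (s - 1)) (Set.Ioi δ) :=
    (h_int.mono_set h_sub).mono' (by fun_prop)
      (ae_restrict_of_forall_mem measurableSet_Ioi dominated)
  refine ⟨h_intE, ?_⟩
  calc ∫ t in Set.Ioi δ, ‖E t * t ^ (s - 1)‖
      ≤ ∫ t in Set.Ioi δ, B * (t ^ (s - 1) * exp (-(lam * t))) :=
        setIntegral_mono_on h_intE.norm (h_int.mono_set h_sub) measurableSet_Ioi dominated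
    _ ≤ ∫ t in Set.Ioi 0, B * (t ^ (s - 1) * exp (-(lam * t))) := by
        refine setIntegral_mono_set h_int ?_ h_sub.eventuallyLE
        refine ae_restrict_of_forall_mem measurableSet_Ioi fun t ht => ?_
        have ht : 0 < t := ht
        simp only [Pi.zero_apply]
        positivity
    _ = B * (lam ^ (-s) * Gamma s) := by
        rw [MeasureTheory.integral_const_mul, integral_rpow_mul_exp_neg_mul_eq hs hlam]

lemma intervalIntegrable_and_abs_integral_mul_rpow_le {E : ℝ → ℝ} {A B δ T : ℝ}
    (hE : Measurable E) (hs : 0 < s) (hlam : 0 < lam) (hδ : 0 ≤ δ) (hB : 0 ≤ B) (hT : 0 ≤ T)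
    (hnear : ∀ t ∈ Set.Ioc 0 δ, |E t| ≤ A)
    (hfar : ∀ t ∈ Set.Ioi δ, |E t| ≤ B * exp (-(lam * t))) :
    IntervalIntegrable (fun t => E t * t ^ (s - 1)) volume 0 T ∧
      |∫ t in 0..T, E t * t ^ (s - 1)| ≤ A * (δ ^ s / s) + B * (lam ^ (-s) * Gamma s) := by
  obtain ⟨int_near, norm_near⟩ := integrableOn_and_integral_norm_le_of_bounded hE hs hδ hnear
  obtain ⟨int_far, norm_far⟩ :=
    integrableOn_and_integral_norm_le_of_exp_decay hE hs hlam hδ hB hfar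
  have int_Ioi : IntegrableOn (fun t => E t * t ^ (s - 1)) (Set.Ioi 0) := by
    rw [← Set.Ioc_union_Ioi_eq_Ioi hδ]
    exact int_near.union int_far
  refine ⟨(intervalIntegrable_iff_integrableOn_Ioc_of_le hT).2
    (int_Ioi.mono_set Set.Ioc_subset_Ioi_self), ?_⟩
  rw [integral_of_le hT]
  calc |∫ t in Set.Ioc 0 T, E t * t ^ (s - 1)|
      ≤ ∫ t in Set.Ioc 0 T, ‖E t * t ^ (s - 1)‖ :=
        MeasureTheory.norm_integral_le_integral_norm fun t => E t * t ^ (s - 1)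
    _ ≤ ∫ t in Set.Ioi 0, ‖E t * t ^ (s - 1)‖ :=
        setIntegral_mono_set int_Ioi.norm (ae_of_all _ fun _ => norm_nonneg _)
          Set.Ioc_subset_Ioi_self.eventuallyLE
    _ = (∫ t in Set.Ioc 0 δ, ‖E t * t ^ (s - 1)‖) + ∫ t in Set.Ioi δ, ‖E t * t ^ (s - 1)‖ := by
        rw [← Set.Ioc_union_Ioi_eq_Ioi hδ]
        exact setIntegral_union (Set.Ioc_disjoint_Ioi le_rfl) measurableSet_Ioi int_near.norm
          int_far.norm
    _ ≤ A * (δ ^ s / s) + B * (lam ^ (-s) * Gamma s) := add_le_add norm_near norm_far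

end GammaWeight

section Quadrature

/-- The quadrature approximation of `λ^{-s} = Γ(s)⁻¹ ∫₀^∞ e^{-λt} t^{s-1} dt`: the integral is cut
off at `T` and the exponential is replaced by its interpolant `I_r`. -/
noncomputable def negPowQuad (r s Δt T lam : ℝ) : ℝ :=
  1 / Gamma s * ∫ t in 0..T, interpR r s Δt (fun u => exp (-lam * u)) t * t ^ (s - 1)

variable {r s Δt T lam : ℝ}

lemma intervalIntegrable_and_abs_integral_interpR_exp_sub_le (hs : 0 < s)
    (hr : r ∈ Set.Icc 0 (4 - 2 * s)) (hlam : 0 < lam) (hΔt : 0 < Δt) (hT : 0 ≤ T) :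
    IntervalIntegrable (fun t =>
      (interpR r s Δt (fun u => exp (-lam * u)) t - exp (-lam * t)) * t ^ (s - 1)) volume 0 T ∧
    |∫ t in 0..T, (interpR r s Δt (fun u => exp (-lam * u)) t - exp (-lam * t)) * t ^ (s - 1)| ≤
      (1 / s + 2 ^ s * Gamma s) * (lam ^ (r / 2) * Δt ^ (r / 2 + s)) := by
  have h_meas : Measurable fun t =>
      interpR r s Δt (fun u => exp (-lam * u)) t - exp (-lam * t) :=
    (measurable_interpR r s Δt _).sub (by fun_prop)
  obtain ⟨h_int, h_le⟩ := intervalIntegrable_and_abs_integral_mul_rpow_le h_meas hs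
    (half_pos hlam) hΔt.le (by positivity) hT
    (fun t ht => abs_interpR_exp_sub_le_of_le hs.le hr hlam hΔt ht.1.le ht.2)
    (fun t ht => abs_interpR_exp_sub_le_of_ge hs.le hr hlam hΔt (le_of_lt ht))
  refine ⟨h_int, h_le.trans_eq ?_⟩
  rw [mul_rpow hlam.le hΔt.le, mul_rpow hlam.le hΔt.le, rpow_add hlam, rpow_add hΔt,
    rpow_neg (half_pos hlam).le, div_rpow hlam.le two_pos.le]
  field_simp

lemma abs_rpow_neg_sub_negPowQuad_le (hs : 0 < s) (hs1 : s ≤ 1) (hr : r ∈ Set.Icc 0 (4 - 2 * s))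
    (hlam : 0 < lam) (hΔt : 0 < Δt) (hT : 0 ≤ T) :
    |lam ^ (-s) - negPowQuad r s Δt T lam| ≤
      (1 / (s * Gamma s) + 2 ^ s) * (lam ^ (r / 2) * Δt ^ (r / 2 + s)) +
        lam ^ (-s) * exp (-(lam * T)) := by
  have hΓ : 0 < Gamma s := Gamma_pos_of_pos hs
  obtain ⟨int_err, abs_err⟩ :=
    intervalIntegrable_and_abs_integral_interpR_exp_sub_le hs hr hlam hΔt hT
  set err := ∫ t in 0..T,
    (interpR r s Δt (fun u => exp (-lam * u)) t - exp (-lam * t)) * t ^ (s - 1)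
  have int_exp := integrableOn_rpow_mul_exp_neg_mul hs hlam
  have tail_le := integral_Ioi_rpow_mul_exp_neg_mul_le hs hs1 hlam hT
  have tail_nonneg : 0 ≤ ∫ t in Set.Ioi T, t ^ (s - 1) * exp (-(lam * t)) :=
    setIntegral_nonneg measurableSet_Ioi fun t ht =>
      mul_nonneg (rpow_nonneg (hT.trans (le_of_lt ht)) _) (exp_pos _).le
  have truncated := integral_Ioi_sub_Ioi int_exp hT
  set tail := ∫ t in Set.Ioi T, t ^ (s - 1) * exp (-(lam * t))
  have quad_eq : ∫ t in 0..T, interpR r s Δt (fun u => exp (-lam * u)) t * t ^ (s - 1) =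
      err + (lam ^ (-s) * Gamma s - tail) := by
    rw [← integral_rpow_mul_exp_neg_mul_eq hs hlam, truncated,
      ← intervalIntegral.integral_add int_err
        ((intervalIntegrable_iff_integrableOn_Ioc_of_le hT).2
          (int_exp.mono_set Set.Ioc_subset_Ioi_self))]
    simp only [neg_mul]
    ring_nf
  have error_eq : lam ^ (-s) - negPowQuad r s Δt T lam = (tail - err) / Gamma s := by
    rw [negPowQuad, quad_eq]
    field_simp
    ring
  rw [error_eq, abs_div, abs_of_pos hΓ, div_le_iff₀ hΓ]
  calc |tail - err| ≤ |tail| + |err| := abs_sub _ _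
    _ ≤ exp (-(lam * T)) * (lam ^ (-s) * Gamma s) +
          (1 / s + 2 ^ s * Gamma s) * (lam ^ (r / 2) * Δt ^ (r / 2 + s)) := by
        rw [abs_of_nonneg tail_nonneg]
        gcongr
    _ = _ := by field_simp; ring

end Quadrature

section Truncation

variable {lamMin lam Δt T : ℝ}

lemma exp_neg_mul_le_rpow {a : ℝ} (hlamMin : 0 < lamMin) (hlam : lamMin ≤ lam) (hΔt : 0 < Δt)
    (hT : 0 ≤ T) (hcut : 1 / lamMin * log (Δt ^ (-a)) ≤ T) : exp (-(lam * T)) ≤ Δt ^ a := by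
  rw [log_rpow hΔt, one_div, inv_mul_le_iff₀ hlamMin] at hcut
  rw [rpow_def_of_pos hΔt, exp_le_exp]
  linarith [mul_le_mul_of_nonneg_right hlam hT]

lemma rpow_neg_mul_exp_neg_mul_le {a s : ℝ} (has : 0 ≤ a + s) (hlamMin : 0 < lamMin)
    (hlam : lamMin ≤ lam) (hΔt : 0 < Δt) (hT : 0 ≤ T)
    (hcut : 1 / lamMin * log (Δt ^ (-(a + s))) ≤ T) :
    lam ^ (-s) * exp (-(lam * T)) ≤ lamMin ^ (-(a + s)) * (lam ^ a * Δt ^ (a + s)) := by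
  have hlam0 : 0 < lam := hlamMin.trans_le hlam
  calc lam ^ (-s) * exp (-(lam * T)) = lam ^ (-(a + s)) * (lam ^ a * exp (-(lam * T))) := by
        rw [← mul_assoc, ← rpow_add hlam0]
        ring_nf
    _ ≤ lamMin ^ (-(a + s)) * (lam ^ a * Δt ^ (a + s)) := by
        have spectral : lam ^ (-(a + s)) ≤ lamMin ^ (-(a + s)) :=
          rpow_le_rpow_of_nonpos hlamMin hlam (neg_nonpos.2 has)
        have cutoff : exp (-(lam * T)) ≤ Δt ^ (a + s) :=
          exp_neg_mul_le_rpow hlamMin hlam hΔt hT hcut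
        gcongr

end Truncation

lemma rpow_half_sq {x : ℝ} (hx : 0 ≤ x) (y : ℝ) : (x ^ (y / 2)) ^ 2 = x ^ y := by
  rw [← rpow_mul_natCast hx, Nat.cast_ofNat, div_mul_cancel₀ y two_ne_zero]

theorem stmt11_general {ι : Type*} {r s lamMin Δt T : ℝ} (hs : s ∈ Set.Ioc 0 1)
    (hr : r ∈ Set.Icc 0 (4 - 2 * s)) (hlamMin : 0 < lamMin) (hΔt : 0 < Δt) (hT : 0 ≤ T)
    (hcut : 1 / lamMin * log (Δt ^ (-(r / 2 + s))) ≤ T) {lam c : ι → ℝ}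
    (hlam : ∀ m, lamMin ≤ lam m) (hc : Summable fun m => lam m ^ r * c m ^ 2) :
    (Summable fun m => c m ^ 2 * (lam m ^ (-s) - negPowQuad r s Δt T (lam m)) ^ 2) ∧
      ∑' m, c m ^ 2 * (lam m ^ (-s) - negPowQuad r s Δt T (lam m)) ^ 2 ≤
        (1 / (s * Gamma s) + 2 ^ s + lamMin ^ (-(r / 2 + s))) ^ 2 * Δt ^ (r + 2 * s) *
          ∑' m, lam m ^ r * c m ^ 2 := by
  set K := 1 / (s * Gamma s) + 2 ^ s + lamMin ^ (-(r / 2 + s)) with hK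
  have mode_bound (m : ι) : |lam m ^ (-s) - negPowQuad r s Δt T (lam m)| ≤
      K * (lam m ^ (r / 2) * Δt ^ ((r + 2 * s) / 2)) := by
    rw [show (r + 2 * s) / 2 = r / 2 + s by ring, hK, add_mul _ (lamMin ^ _)]
    exact (abs_rpow_neg_sub_negPowQuad_le hs.1 hs.2 hr (hlamMin.trans_le (hlam m)) hΔt hT).trans
      (add_le_add_right (rpow_neg_mul_exp_neg_mul_le (by linarith [hr.1, hs.1])
        hlamMin (hlam m) hΔt hT hcut) _)
  have term_le (m : ι) : c m ^ 2 * (lam m ^ (-s) - negPowQuad r s Δt T (lam m)) ^ 2 ≤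
      K ^ 2 * Δt ^ (r + 2 * s) * (lam m ^ r * c m ^ 2) := by
    calc c m ^ 2 * (lam m ^ (-s) - negPowQuad r s Δt T (lam m)) ^ 2
        ≤ c m ^ 2 * (K * (lam m ^ (r / 2) * Δt ^ ((r + 2 * s) / 2))) ^ 2 :=
          mul_le_mul_of_nonneg_left (sq_le_sq' (abs_le.1 (mode_bound m)).1
            (abs_le.1 (mode_bound m)).2) (sq_nonneg _)
      _ = K ^ 2 * Δt ^ (r + 2 * s) * (lam m ^ r * c m ^ 2) := by
          rw [mul_pow, mul_pow, rpow_half_sq (hlamMin.le.trans (hlam m)), rpow_half_sq hΔt.le]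
          ring
  have dominating := hc.mul_left (K ^ 2 * Δt ^ (r + 2 * s))
  have h_summable := dominating.of_nonneg_of_le (fun m => by positivity) term_le
  exact ⟨h_summable, (h_summable.tsum_le_tsum term_le dominating).trans_eq tsum_mul_left⟩

/-- Let `s ∈ (0,1)`, `r ∈ [0, 4−2s]` and `λ_min > 0`. There is
`C = C(r,s,λ_min) > 0` such that: for `Δt ∈ (0,1)`, `N ≥ 1` with
`T = NΔt > (1/λ_min) log(Δt^{−(r/2+s)})`, any sequence `λ_m ≥ λ_min` and any `(c_m)`
with `Σ λ_m^r c_m² < ∞`, one has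
`Σ_m c_m² (λ_m^{−s} − (1/Γ(s)) ∫_0^T I_r[e^{−λ_m ·}](t) t^{s−1} dt)²
  ≤ C Δt^{r+2s} Σ_m λ_m^r c_m²`. -/
theorem stmt11 (s r lamMin : ℝ) (hs : s ∈ Set.Ioo (0:ℝ) 1)
    (hr : r ∈ Set.Icc (0:ℝ) (4 - 2 * s)) (hlm : 0 < lamMin) :
    ∃ C : ℝ, 0 < C ∧ ∀ Δt : ℝ, Δt ∈ Set.Ioo (0:ℝ) 1 → ∀ N : ℕ, 0 < N →
      (1 / lamMin) * Real.log (Δt ^ (-(r / 2 + s))) < (N:ℝ) * Δt →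
      ∀ lam c : ℕ → ℝ, (∀ m, lamMin ≤ lam m) →
      Summable (fun m => lam m ^ r * (c m) ^ 2) →
      ∑' m, (c m) ^ 2 *
          (lam m ^ (-s) - (1 / Real.Gamma s) *
            ∫ t in (0:ℝ)..((N:ℝ) * Δt),
              interpR r s Δt (fun u => Real.exp (-(lam m) * u)) t * t ^ (s - 1)) ^ 2
        ≤ C * Δt ^ (r + 2 * s) * ∑' m, lam m ^ r * (c m) ^ 2 := by
  have hs0 := hs.1
  exact ⟨(1 / (s * Gamma s) + 2 ^ s + lamMin ^ (-(r / 2 + s))) ^ 2, by positivity,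
    fun Δt hΔt N _ hcut lam c hlam hc => (stmt11_general ⟨hs.1, hs.2.le⟩ hr hlm hΔt.1
      (mul_nonneg N.cast_nonneg hΔt.1.le) hcut.le hlam hc).2⟩
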